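/- Every graph G has a structured tree decomposition of width equal to tw(G), i.e., a tree decomposition (T, χ) of width tw(G) such that every bag χ(v) is a potential maximal clique of G (a maximal clique of G+F for some minimal chordal completion F of G). -/

import Mathlib

universe u v

variable {V : Type u}

/-- The open neighborhood of a set `D`: vertices outside `D` with a neighbor in `D`. -/
def nbhd (G : SimpleGraph V) (D : Set V) : Set V :=
  {w | w ∉ D ∧ ∃ u ∈ D, G.Adj u w}

/-- `u` and `w` are joined by a walk all of whose vertices lie in `S`. -/
def ConnectedIn (G : SimpleGraph V) (S : Set V) (u w : V) : Prop :=
  ∃ p : G.Walk u w, ∀ x ∈ p.support, x ∈ S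

/-- `D` is a connected component of the subgraph of `G` induced on `S`. -/
def IsCompOf (G : SimpleGraph V) (S : Set V) (D : Set V) : Prop :=
  D.Nonempty ∧ D ⊆ S ∧ (∀ u ∈ D, ∀ w ∈ D, ConnectedIn G D u w) ∧
    ∀ u ∈ D, ∀ w ∈ S, G.Adj u w → w ∈ D

/-- `X` is a minimal separator: some `u, w` outside `X` are separated by `X`
but by no proper subset of `X`. -/
def IsMinimalSeparator (G : SimpleGraph V) (X : Set V) : Prop :=
  ∃ u w : V, u ∉ X ∧ w ∉ X ∧ ¬ ConnectedIn G Xᶜ u w ∧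
    ∀ Y : Set V, Y ⊂ X → ConnectedIn G Yᶜ u w

/-- A tree decomposition of the subgraph of `G` induced on `W`. -/
structure IsTreeDecompOn {T : Type v} (G : SimpleGraph V) (W : Set V)
    (tree : SimpleGraph T) (χ : T → Set V) : Prop where
  isTree : tree.IsTree
  bags_subset : ∀ t, χ t ⊆ W
  mem_bag : ∀ x ∈ W, ∃ t, x ∈ χ t
  edge_bag : ∀ x ∈ W, ∀ y ∈ W, G.Adj x y → ∃ t, x ∈ χ t ∧ y ∈ χ t
  trace_connected : ∀ x : V, ∀ t₁, x ∈ χ t₁ → ∀ t₂, x ∈ χ t₂ →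
    ConnectedIn tree {t | x ∈ χ t} t₁ t₂

/-- A tree decomposition of `G`. -/
def IsTreeDecomp {T : Type v} (G : SimpleGraph V)
    (tree : SimpleGraph T) (χ : T → Set V) : Prop :=
  IsTreeDecompOn G Set.univ tree χ

/-- The treewidth of `G`: the least `w` such that `G` has a tree decomposition
all of whose bags have at most `w + 1` vertices. -/
noncomputable def treewidth (G : SimpleGraph V) : ℕ :=
  sInf {w | ∃ (n : ℕ) (tree : SimpleGraph (Fin n)) (χ : Fin n → Set V),
    IsTreeDecomp G tree χ ∧ ∀ t, (χ t).ncard ≤ w + 1}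

/-- `G` is chordal: it has no induced cycle of length at least 4. -/
def IsChordal (G : SimpleGraph V) : Prop :=
  ∀ n : ℕ, 4 ≤ n → ¬ ∃ f : Fin n → V, Function.Injective f ∧
    ∀ i j : Fin n, G.Adj (f i) (f j) ↔
      ((i.val + 1) % n = j.val ∨ (j.val + 1) % n = i.val)

/-- `H` is a minimal chordal completion (fill-in) of `G`. -/
def IsMinimalChordalCompletion (G H : SimpleGraph V) : Prop :=
  G ≤ H ∧ IsChordal H ∧
    ∀ H' : SimpleGraph V, G ≤ H' → H' ≤ H → IsChordal H' → H' = H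

/-- `Ω` is a potential maximal clique of `G`: a maximal clique of some minimal
chordal completion of `G`. -/
def IsPMC (G : SimpleGraph V) (Ω : Set V) : Prop :=
  ∃ H : SimpleGraph V, IsMinimalChordalCompletion G H ∧
    H.IsClique Ω ∧ ∀ Ω' : Set V, H.IsClique Ω' → Ω ⊆ Ω' → Ω' = Ω

/-- The clique number `ω(G)`. -/
noncomputable def cliqueNumber (G : SimpleGraph V) : ℕ :=
  sSup {n | ∃ s : Finset V, G.IsNClique n s}

/-- A stable (independent) set of vertices. -/
def StableSet (G : SimpleGraph V) (S : Set V) : Prop :=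
  ∀ u ∈ S, ∀ w ∈ S, ¬ G.Adj u w

/-- The Ramsey number `R(t, s)`: the least `n` such that every graph on `n`
vertices contains a clique of size `t` or a stable set of size `s`. -/
noncomputable def ramseyNum (t s : ℕ) : ℕ :=
  sInf {n | ∀ G : SimpleGraph (Fin n),
    (∃ K : Finset (Fin n), G.IsNClique t K) ∨
    (∃ S : Finset (Fin n), S.card = s ∧ StableSet G ↑S)}

/-- `G` is `d`-degenerate: every induced subgraph has a vertex of degree less
than `d` (within that subgraph). -/
def DegenerateLE (G : SimpleGraph V) (d : ℕ) : Prop :=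
  ∀ W : Set V, W.Nonempty → ∃ x ∈ W, (W ∩ G.neighborSet x).ncard < d

/-- `D` is the big component for `x`: a component of `G \ N[x]` with more than
half of all vertices. -/
def IsBigComp (G : SimpleGraph V) (x : V) (D : Set V) : Prop :=
  IsCompOf G ((insert x (G.neighborSet x))ᶜ) D ∧ Nat.card V < 2 * D.ncard

/-- The `C`-side of the canonical star separation: `C(x) = {x} ∪ N(B(x))`. -/
def Cside (G : SimpleGraph V) (B : V → Set V) (x : V) : Set V :=
  insert x (nbhd G (B x))

/-- The `A`-side of the canonical star separation. -/
def Aside (G : SimpleGraph V) (B : V → Set V) (x : V) : Set V :=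
  (B x ∪ Cside G B x)ᶜ

/-- Star twins. -/
def StarTwins (G : SimpleGraph V) (B : V → Set V) (x y : V) : Prop :=
  B x = B y ∧ Cside G B x \ {x} = Cside G B y \ {y} ∧
    Aside G B x ∪ {x} = Aside G B y ∪ {y}

/-- The relation `≤_A` (partial order by `A`-sides, ties among star twins
broken by the total order `O`). -/
def leA (G : SimpleGraph V) (B : V → Set V) (O : V → ℕ) (x y : V) : Prop :=
  x = y ∨ (StarTwins G B x y ∧ O x < O y) ∨
    (¬ StarTwins G B x y ∧ y ∈ Aside G B x)

/-- `Core(S)`: the `≤_A`-minimal elements of `S`. -/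
def CoreS (G : SimpleGraph V) (S : Set V) (B : V → Set V) (O : V → ℕ) : Set V :=
  {x ∈ S | ∀ u ∈ S, leA G B O u x → u = x}

/-- The central bag `β(S)`. -/
def centralBag (G : SimpleGraph V) (S : Set V) (B : V → Set V) (O : V → ℕ) :
    Set V :=
  ⋂ x ∈ CoreS G S B O, (B x ∪ Cside G B x)

/-- `G` has a clique cutset. -/
def HasCliqueCutset (G : SimpleGraph V) : Prop :=
  ∃ K : Set V, G.IsClique K ∧ ∃ u w, u ∉ K ∧ w ∉ K ∧ ¬ ConnectedIn G Kᶜ u w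

/-- A chordless (induced) path, as a walk. -/
def IsInducedPathW (G : SimpleGraph V) {a b : V} (P : G.Walk a b) : Prop :=
  P.IsPath ∧ ∀ i j : ℕ, i + 2 ≤ j → j ≤ P.length →
    ¬ G.Adj (P.getVert i) (P.getVert j)

/-- Two `a`–`b` walks have disjoint and anticomplete interiors. -/
def IntDisjAnticomplete (G : SimpleGraph V) {a b : V} (P Q : G.Walk a b) : Prop :=
  ∀ u ∈ P.support, ∀ w ∈ Q.support, u ≠ a → u ≠ b → w ≠ a → w ≠ b →
    u ≠ w ∧ ¬ G.Adj u w

/-- `G` contains a theta (as an induced subgraph). -/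
def HasTheta (G : SimpleGraph V) : Prop :=
  ∃ (a b : V) (P₁ P₂ P₃ : G.Walk a b),
    ¬ G.Adj a b ∧
    IsInducedPathW G P₁ ∧ 2 ≤ P₁.length ∧
    IsInducedPathW G P₂ ∧ 2 ≤ P₂.length ∧
    IsInducedPathW G P₃ ∧ 2 ≤ P₃.length ∧
    IntDisjAnticomplete G P₁ P₂ ∧
    IntDisjAnticomplete G P₁ P₃ ∧
    IntDisjAnticomplete G P₂ P₃

/- Completing every bag of an optimal tree decomposition to a clique gives a chordal supergraph of
`G` each of whose cliques lies in a single bag. Choose a minimal chordal completion `H` of `G` below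
it. Repeatedly removing a simplicial vertex shows that `H` has a clique tree, i.e. a tree
decomposition whose bags are the maximal cliques of `H`. These bags are potential maximal cliques of
`G`, and each is contained in a bag of the optimal decomposition, so the width does not grow. -/

open SimpleGraph

section ConnectedIn

variable {G : SimpleGraph V} {S S' : Set V} {u v w : V}

lemma ConnectedIn.refl (hu : u ∈ S) : ConnectedIn G S u u :=
  ⟨.nil, by simpa using hu⟩

lemma ConnectedIn.symm (h : ConnectedIn G S u v) : ConnectedIn G S v u := by
  obtain ⟨p, hp⟩ := h
  exact ⟨p.reverse, by simpa using hp⟩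

lemma ConnectedIn.trans (huv : ConnectedIn G S u v) (hvw : ConnectedIn G S v w) :
    ConnectedIn G S u w := by
  obtain ⟨p, hp⟩ := huv
  obtain ⟨q, hq⟩ := hvw
  exact ⟨p.append q, fun x hx => ((Walk.mem_support_append_iff p q).1 hx).elim (hp x) (hq x)⟩

lemma ConnectedIn.mono (hS : S ⊆ S') (h : ConnectedIn G S u v) : ConnectedIn G S' u v := by
  obtain ⟨p, hp⟩ := h
  exact ⟨p, fun x hx => hS (hp x hx)⟩

lemma ConnectedIn.map {V' : Type*} {G' : SimpleGraph V'} {S' : Set V'} (f : G →g G')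
    (hf : Set.MapsTo f S S') (h : ConnectedIn G S u v) : ConnectedIn G' S' (f u) (f v) := by
  obtain ⟨p, hp⟩ := h
  refine ⟨p.map f, fun x hx => ?_⟩
  rw [Walk.support_map, List.mem_map] at hx
  obtain ⟨y, hy, rfl⟩ := hx
  exact hf (hp y hy)

lemma ConnectedIn.of_adj (h : G.Adj u v) (hu : u ∈ S) (hv : v ∈ S) :
    ConnectedIn G S u v :=
  ⟨h.toWalk, by simp [hu, hv]⟩

lemma ConnectedIn.mem_right (h : ConnectedIn G S u v) : v ∈ S :=
  h.elim fun p hp => hp v p.end_mem_support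

lemma exists_isCompOf_mem (hu : u ∈ S) : ∃ D, IsCompOf G S D ∧ u ∈ D := by
  classical
  let D : Set V := {w | ConnectedIn G S u w}
  have hconn : ∀ w ∈ D, ConnectedIn G D u w := fun w ⟨p, hp⟩ =>
    ⟨p, fun x hx => ⟨p.takeUntil x hx, fun y hy =>
      hp y (p.support_takeUntil_subset_support hx hy)⟩⟩
  have huD : u ∈ D := .refl hu
  refine ⟨D, ⟨⟨u, huD⟩, fun w hw => hw.mem_right, fun x hx y hy => ?_,
    fun x hx y hy hxy => ?_⟩, huD⟩
  · exact (hconn x hx).symm.trans (hconn y hy)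
  · exact hx.trans (.of_adj hxy hx.mem_right hy)

/- A shortest walk inside `S` is an induced path: a repetition or a chord would shorten it. -/
lemma ConnectedIn.exists_isInducedPathW (h : ConnectedIn G S u v) :
    ∃ P : G.Walk u v, IsInducedPathW G P ∧ ∀ x ∈ P.support, x ∈ S := by
  classical
  obtain ⟨p, hpS, hpmin⟩ := exists_minimalFor_of_wellFoundedLT
    (fun p : G.Walk u v => ∀ x ∈ p.support, x ∈ S) Walk.length h
  have hmin (q : G.Walk u v) (hq : ∀ x ∈ q.support, x ∈ S) : p.length ≤ q.length :=
    (le_total q.length p.length).elim (hpmin hq) id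
  have hbS : ∀ x ∈ p.bypass.support, x ∈ S :=
    fun x hx => hpS x (p.support_bypass_subset_support hx)
  refine ⟨p.bypass, ⟨p.bypass_isPath, fun i j hij hj hadj => ?_⟩, hbS⟩
  let shortcut := (p.bypass.take i).append (.cons hadj (p.bypass.drop j))
  have hlt : shortcut.length < p.length := by
    have := p.length_bypass_le_length
    simp only [shortcut, Walk.length_append, Walk.length_cons, Walk.take_length,
      Walk.drop_length]
    omega
  refine hlt.not_ge (hmin shortcut fun x hx => hbS x ?_)
  simp only [shortcut, Walk.mem_support_append_iff, Walk.support_cons, List.mem_cons] at hx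
  rcases hx with hx | rfl | hx
  · exact (p.bypass.isSubwalk_take i).support_subset hx
  · exact p.bypass.getVert_mem_support i
  · exact (p.bypass.isSubwalk_drop j).support_subset hx

end ConnectedIn

section Chordal

variable {G : SimpleGraph V}

lemma add_one_mod_eq_ite {i n : ℕ} (hi : i < n) :
    (i + 1) % n = if i + 1 = n then 0 else i + 1 := by
  split_ifs with h
  · rw [h, Nat.mod_self]
  · exact Nat.mod_eq_of_lt (by omega)

lemma IsInducedPathW.adj_getVert_iff {a b : V} {P : G.Walk a b} (hP : IsInducedPathW G P)
    {i j : ℕ} (hi : i ≤ P.length) (hj : j ≤ P.length) :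
    G.Adj (P.getVert i) (P.getVert j) ↔ i + 1 = j ∨ j + 1 = i := by
  constructor
  · intro h
    have hij : i ≠ j := fun hij => h.ne (congrArg P.getVert hij)
    by_contra! hne
    rcases hij.lt_or_gt with hlt | hlt
    · exact hP.2 i j (by omega) hj h
    · exact hP.2 j i (by omega) hi h.symm
  · rintro (rfl | rfl)
    · exact P.adj_getVert_succ (by omega)
    · exact (P.adj_getVert_succ (by omega)).symm

lemma IsInducedPathW.not_isChordal {a b v : V} {P : G.Walk a b} (hP : IsInducedPathW G P)
    (hlen : 2 ≤ P.length) (hvP : v ∉ P.support)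
    (hadj : ∀ w ∈ P.support, G.Adj v w ↔ w = a ∨ w = b) : ¬ IsChordal G := by
  have hv (i : Fin (P.length + 1)) :
      G.Adj v (P.getVert i) ↔ (i : ℕ) = 0 ∨ (i : ℕ) = P.length := by
    rw [hadj _ (P.getVert_mem_support i), hP.1.getVert_eq_start_iff (by omega),
      hP.1.getVert_eq_end_iff (by omega)]
  refine fun hG => hG (P.length + 1 + 1) (by omega)
    ⟨Fin.cons v fun i : Fin (P.length + 1) => P.getVert i, ?_, fun i j => ?_⟩
  · refine Fin.cons_injective_iff.2 ⟨?_, fun i j hij => Fin.ext ?_⟩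
    · rintro ⟨i, rfl⟩
      exact hvP (P.getVert_mem_support i)
    · exact hP.1.getVert_injOn (Nat.le_of_lt_succ i.2) (Nat.le_of_lt_succ j.2) hij
  · rw [add_one_mod_eq_ite i.2, add_one_mod_eq_ite j.2]
    cases i using Fin.cases with
    | zero =>
      cases j using Fin.cases with
      | zero => simp
      | succ j =>
        simp only [Fin.cons_zero, Fin.cons_succ, hv, Fin.val_zero, Fin.val_succ]
        grind
    | succ i =>
      cases j using Fin.cases with
      | zero =>
        simp only [Fin.cons_zero, Fin.cons_succ, G.adj_comm _ v, hv, Fin.val_zero, Fin.val_succ]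
        grind
      | succ j =>
        simp only [Fin.cons_succ, Fin.val_succ,
          hP.adj_getVert_iff (Nat.le_of_lt_succ i.2) (Nat.le_of_lt_succ j.2)]
        grind

lemma IsChordal.isClique_nbhd_inter_neighborSet (hG : IsChordal G) {v : V} {D : Set V}
    (hD : ∀ c ∈ D, ∀ d ∈ D, ConnectedIn G D c d)
    (hDv : D ⊆ (insert v (G.neighborSet v))ᶜ) :
    G.IsClique (nbhd G D ∩ G.neighborSet v) := by
  rintro x ⟨⟨-, c, hc, hcx⟩, hvx⟩ y ⟨⟨-, d, hd, hdy⟩, hvy⟩ hxy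
  by_contra hnadj
  have hconn : ConnectedIn G (insert x (insert y D)) x y :=
    (ConnectedIn.of_adj hcx.symm (by simp) (by simp [hc])).trans <|
      ((hD c hc d hd).mono fun z hz => by simp [hz]).trans <|
        .of_adj hdy (by simp [hd]) (by simp)
  obtain ⟨P, hP, hPS⟩ := hconn.exists_isInducedPathW
  have hlen : 2 ≤ P.length := by
    have h0 : P.length ≠ 0 := fun h => hxy (Walk.eq_of_length_eq_zero h)
    have h1 : P.length ≠ 1 := fun h => hnadj (Walk.adj_of_length_eq_one h)
    omega
  refine hP.not_isChordal hlen (v := v) (fun hvP => ?_) (fun w hw => ⟨fun hvw => ?_, ?_⟩) hG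
  · rcases hPS v hvP with rfl | rfl | hvD
    · exact G.irrefl hvx
    · exact G.irrefl hvy
    · exact hDv hvD (.inl rfl)
  · rcases hPS w hw with rfl | rfl | hwD
    · exact .inl rfl
    · exact .inr rfl
    · exact absurd (.inr hvw) (hDv hwD)
  · rintro (rfl | rfl)
    exacts [hvx, hvy]

/-- A vertex `v` is simplicial in `W` when its neighbours in `W` form a clique, i.e. when it is a
simplicial vertex of the subgraph induced on `insert v W`. -/
def IsSimplicialIn (G : SimpleGraph V) (W : Set V) (v : V) : Prop :=
  G.IsClique (W ∩ G.neighborSet v)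
lemma isSimplicialIn_inter_union_nbhd_iff {D W : Set V} {w : V} (hw : w ∈ D) :
    IsSimplicialIn G (W ∩ (D ∪ nbhd G D)) w ↔ IsSimplicialIn G W w := by
  have hN : G.neighborSet w ⊆ D ∪ nbhd G D := fun x hx =>
    (em (x ∈ D)).imp_right fun hxD => ⟨hxD, w, hw, hx⟩
  rw [IsSimplicialIn, IsSimplicialIn, Set.inter_assoc, Set.inter_eq_right.2 hN]

lemma IsCompOf.inter_nbhd_subset_neighborSet {D W : Set V} {v : V}
    (hD : IsCompOf G (W \ insert v (G.neighborSet v)) D) :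
    W ∩ nbhd G D ⊆ G.neighborSet v := by
  rintro s ⟨hsW, hsD, c, hcD, hcs⟩
  have hcv : c ∉ insert v (G.neighborSet v) := (hD.2.1 hcD).2
  by_contra hvs
  refine hsD (hD.2.2.2 c hcD s ⟨hsW, ?_⟩ hcs)
  rintro (rfl | h)
  exacts [hcv (.inr hcs.symm), hvs h]

/- Dirac's lemma, with a clique `S` to be avoided. The neighbourhood `S'` of a component `D` of
`W \ N[v]` is a clique, so the induction hypothesis for `D ∪ S'` and `S'` gives a simplicial vertex
in `D`, which is not adjacent to `v`. If this vertex lies in `S`, starting again from it gives one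
that does not. -/
theorem IsChordal.exists_isSimplicialIn (hG : IsChordal G) {W S : Set V} (hW : W.Finite)
    (hS : G.IsClique S) (hWS : ¬ W ⊆ S) : ∃ w ∈ W, w ∉ S ∧ IsSimplicialIn G W w := by
  induction hn : W.ncard using Nat.strong_induction_on generalizing W S with
  | _ n ih =>
  have hstep {v z : V} (hv : v ∈ W) (hz : z ∈ W) (hvz : v ≠ z) (hadj : ¬ G.Adj v z) :
      ∃ w ∈ W, v ≠ w ∧ ¬ G.Adj v w ∧ IsSimplicialIn G W w := by
    obtain ⟨D, hD, hzD⟩ := exists_isCompOf_mem (G := G)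
      (show z ∈ W \ insert v (G.neighborSet v) from ⟨hz, by simp [hvz.symm, hadj]⟩)
    have hS' : G.IsClique (W ∩ nbhd G D) :=
      (hG.isClique_nbhd_inter_neighborSet hD.2.2.1 fun c hc => (hD.2.1 hc).2).subset
        (Set.subset_inter Set.inter_subset_right hD.inter_nbhd_subset_neighborSet)
    have hvW' : v ∉ W ∩ (D ∪ nbhd G D) := by
      rintro ⟨-, hvD | hvN⟩
      · exact (hD.2.1 hvD).2 (.inl rfl)
      · exact G.irrefl (hD.inter_nbhd_subset_neighborSet ⟨hv, hvN⟩)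
    have hlt : (W ∩ (D ∪ nbhd G D)).ncard < W.ncard :=
      Set.ncard_lt_ncard (Set.inter_subset_left.ssubset_of_mem_notMem hv hvW') hW
    obtain ⟨w, ⟨hwW, hw⟩, hwS', hsimp⟩ := ih _ (hn ▸ hlt) (hW.inter_of_left _) hS'
      (fun h => (h ⟨hz, .inl hzD⟩).2.1 hzD) rfl
    have hwD : w ∈ D := hw.resolve_right fun h => hwS' ⟨hwW, h⟩
    have hvw : w ∉ insert v (G.neighborSet v) := (hD.2.1 hwD).2
    exact ⟨w, hwW, fun h => hvw (.inl h.symm), fun h => hvw (.inr h),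
      (isSimplicialIn_inter_union_nbhd_iff hwD).1 hsimp⟩
  by_cases hWc : G.IsClique W
  · obtain ⟨w, hwW, hwS⟩ := Set.not_subset.1 hWS
    exact ⟨w, hwW, hwS, hWc.subset Set.inter_subset_left⟩
  · simp only [SimpleGraph.IsClique, Set.Pairwise, not_forall, exists_prop] at hWc
    obtain ⟨v, hv, z, hz, hvz, hadj⟩ := hWc
    obtain ⟨w, hw, hvw, hadjw, hwsimp⟩ := hstep hv hz hvz hadj
    by_cases hwS : w ∈ S
    · obtain ⟨w', hw', hww', hadj', hsimp⟩ := hstep hw hv hvw.symm fun h => hadjw h.symm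
      exact ⟨w', hw', fun h => hadj' (hS hwS h hww'), hsimp⟩
    · exact ⟨w, hw, hwS, hwsimp⟩

lemma exists_cycle_succ_pred {n : ℕ} (hn : 4 ≤ n) (i : Fin n) :
    ∃ j k : Fin n, j ≠ k ∧ (i.val + 1) % n = j.val ∧ (k.val + 1) % n = i.val ∧
      (j.val + 1) % n ≠ k.val ∧ (k.val + 1) % n ≠ j.val := by
  obtain ⟨j, hj, hj'⟩ : ∃ j < n, j = if i.val + 1 = n then 0 else i.val + 1 :=
    ⟨_, by grind, rfl⟩
  obtain ⟨k, hk, hk'⟩ : ∃ k < n, k = if i.val = 0 then n - 1 else i.val - 1 :=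
    ⟨_, by grind, rfl⟩
  refine ⟨⟨j, hj⟩, ⟨k, hk⟩, ?_⟩
  simp only [ne_eq, Fin.mk.injEq, add_one_mod_eq_ite hk, add_one_mod_eq_ite hj,
    add_one_mod_eq_ite i.2]
  grind

theorem isChordal_of_forall_exists_isSimplicialIn
    (h : ∀ W : Set V, W.Finite → W.Nonempty → ∃ w ∈ W, IsSimplicialIn G W w) : IsChordal G := by
  rintro n hn ⟨f, hf, hadj⟩
  obtain ⟨_, ⟨i, rfl⟩, hi⟩ := h (Set.range f) (Set.finite_range f) ⟨f ⟨0, by omega⟩, ⟨_, rfl⟩⟩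
  obtain ⟨j, k, hjk, hij, hki, hjk₁, hjk₂⟩ := exists_cycle_succ_pred hn i
  have hjk_adj : G.Adj (f j) (f k) :=
    hi ⟨⟨j, rfl⟩, (hadj i j).2 (.inl hij)⟩ ⟨⟨k, rfl⟩, (hadj i k).2 (.inr hki)⟩ (hf.ne hjk)
  exact ((hadj j k).1 hjk_adj).elim hjk₁ hjk₂

end Chordal

section Tree

variable {T : Type*} {tree : SimpleGraph T} {S : Set T} {r a t : T}

lemma isPath_append_of_support_inter {V : Type*} {G : SimpleGraph V} {u v w : V} {p : G.Walk u v}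
    {q : G.Walk v w} (hp : p.IsPath) (hq : q.IsPath) (h : ∀ x ∈ p.support, x ∈ q.support → x = v) :
    (p.append q).IsPath := by
  rw [Walk.isPath_def, Walk.support_append, List.nodup_append']
  refine ⟨hp.support_nodup, hq.support_nodup.tail, fun x hxp hxq => ?_⟩
  obtain rfl := h x hxp (List.mem_of_mem_tail hxq)
  exact (List.nodup_cons.1 (q.cons_tail_support ▸ hq.support_nodup)).1 hxq

lemma ConnectedIn.exists_eq_append_of_dist_le (hT : tree.IsTree) (hS : ConnectedIn tree S a t)
    (hmin : ∀ s ∈ S, tree.dist r a ≤ tree.dist r s) {q : tree.Walk r t} (hq : q.IsPath) :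
    ∃ (p : tree.Walk r a) (p' : tree.Walk a t),
      q = p.append p' ∧ p.length = tree.dist r a ∧ ∀ s ∈ p'.support, s ∈ S := by
  classical
  obtain ⟨p, hp, hlen⟩ := hT.1.exists_path_of_dist r a
  obtain ⟨w, hw⟩ := hS
  have hwS : ∀ s ∈ w.bypass.support, s ∈ S := fun s hs => hw s (w.support_bypass_subset_support hs)
  refine ⟨p, w.bypass, ?_, hlen, hwS⟩
  refine (hT.existsUnique_path r t).unique hq
    (isPath_append_of_support_inter hp w.bypass_isPath fun x hxp hxw => ?_)
  have hx : tree.dist r a ≤ (p.takeUntil x hxp).length := (hmin x (hwS x hxw)).trans (dist_le _)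
  by_contra hxa
  exact (p.length_takeUntil_lt_length hxp hxa).not_ge (hlen ▸ hx)

end Tree

section TreeDecomposition

variable {T : Type*} {G : SimpleGraph V} {W : Set V} {tree : SimpleGraph T} {χ : T → Set V}

/- Root the tree at `r`. Then `v` is a vertex of `X` whose subtree starts farthest from `r`, and
`s` is the top node of that subtree: the path from `r` to a node shared with `u` enters the subtree
of `u` before it meets `s`. -/
lemma IsTreeDecompOn.exists_bag_of_subset (h : IsTreeDecompOn G W tree χ) {X : Set V}
    (hXW : X ⊆ W) (hX : X.Finite) (hne : X.Nonempty) :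
    ∃ v ∈ X, ∃ s, v ∈ χ s ∧ ∀ u ∈ X, ∀ t, u ∈ χ t → v ∈ χ t → u ∈ χ s := by
  obtain ⟨r⟩ := h.isTree.1.nonempty
  have hnearest (x : V) (hx : x ∈ X) :
      ∃ a, x ∈ χ a ∧ ∀ s ∈ {s | x ∈ χ s}, tree.dist r a ≤ tree.dist r s :=
    have hbags : {s | x ∈ χ s}.Nonempty := h.mem_bag x (hXW hx)
    ⟨_, Function.argminOn_mem (tree.dist r) _ hbags, fun s hs => Function.argminOn_le _ _ hs⟩
  have : Nonempty T := ⟨r⟩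
  choose! top htop hmin using hnearest
  obtain ⟨v, hv, hmax⟩ := hX.exists_maximalFor (fun x => tree.dist r (top x)) X hne
  refine ⟨v, hv, top v, htop v hv, fun u hu t hut hvt => ?_⟩
  have hle : tree.dist r (top u) ≤ tree.dist r (top v) :=
    (le_total _ _).elim id (hmax hu)
  obtain ⟨q, hq, -⟩ := h.isTree.existsUnique_path r t
  obtain ⟨p, p', hqp, hlen, -⟩ :=
    (h.trace_connected v _ (htop v hv) t hvt).exists_eq_append_of_dist_le h.isTree (hmin v hv) hq
  obtain ⟨w, w', hqw, hlen', hw'⟩ :=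
    (h.trace_connected u _ (htop u hu) t hut).exists_eq_append_of_dist_le h.isTree (hmin u hu) hq
  have htopv : top v = w'.getVert (p.length - w.length) := calc
    top v = (p.append p').getVert p.length := by simp [Walk.getVert_append]
    _ = (w.append w').getVert p.length := by rw [← hqp, hqw]
    _ = w'.getVert (p.length - w.length) := by
      rw [Walk.getVert_append, if_neg (by omega)]
  exact hw' _ (htopv ▸ w'.getVert_mem_support _)

lemma IsTreeDecompOn.mono {H : SimpleGraph V} (hGH : G ≤ H) (h : IsTreeDecompOn H W tree χ) :
    IsTreeDecompOn G W tree χ :=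
  ⟨h.isTree, h.bags_subset, h.mem_bag, fun x hx y hy hxy => h.edge_bag x hx y hy (hGH hxy),
    h.trace_connected⟩

lemma IsTreeDecompOn.comap_equiv {T' : Type*} (h : IsTreeDecompOn G W tree χ) (e : T' ≃ T) :
    IsTreeDecompOn G W (tree.comap e) (χ ∘ e) where
  isTree := (Iso.comap e tree).isTree_iff.2 h.isTree
  bags_subset t := h.bags_subset (e t)
  mem_bag x hx := e.exists_congr_left.2 <| by simpa using h.mem_bag x hx
  edge_bag x hx y hy hxy := e.exists_congr_left.2 <| by simpa using h.edge_bag x hx y hy hxy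
  trace_connected x a ha b hb := by
    simpa using (h.trace_connected x (e a) ha (e b) hb).map
      (S' := {t | x ∈ (χ ∘ e) t}) (Iso.comap e tree).symm.toHom fun t ht => by simpa using ht

/-- The graph in which two vertices are adjacent when they share a bag of `χ`, that is, the graph
obtained by completing every bag to a clique. For a tree decomposition it is a chordal completion
of the decomposed graph. -/
def bagGraph (χ : T → Set V) : SimpleGraph V where
  Adj x y := x ≠ y ∧ ∃ t, x ∈ χ t ∧ y ∈ χ t
  symm := ⟨fun _ _ ⟨hxy, t, hx, hy⟩ => ⟨hxy.symm, t, hy, hx⟩⟩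
  loopless := ⟨fun _ h => h.1 rfl⟩

lemma IsTreeDecomp.le_bagGraph (h : IsTreeDecomp G tree χ) : G ≤ bagGraph χ :=
  fun x y hxy => ⟨hxy.ne, h.edge_bag x trivial y trivial hxy⟩

lemma IsTreeDecomp.isChordal_bagGraph (h : IsTreeDecomp G tree χ) : IsChordal (bagGraph χ) := by
  refine isChordal_of_forall_exists_isSimplicialIn fun X hX hne => ?_
  obtain ⟨v, hv, s, -, hs⟩ := h.exists_bag_of_subset X.subset_univ hX hne
  have hbag : X ∩ (bagGraph χ).neighborSet v ⊆ χ s :=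
    fun x ⟨hx, _, t, hvt, hxt⟩ => hs x hx t hxt hvt
  exact ⟨v, hv, fun x hx y hy hxy => ⟨hxy, s, hbag hx, hbag hy⟩⟩

lemma IsTreeDecomp.exists_subset_bag_of_isClique (h : IsTreeDecomp G tree χ) {K : Set V}
    (hK : K.Finite) (hclique : (bagGraph χ).IsClique K) : ∃ t, K ⊆ χ t := by
  rcases K.eq_empty_or_nonempty with rfl | hne
  · exact h.isTree.1.nonempty.elim fun t => ⟨t, (χ t).empty_subset⟩
  · obtain ⟨v, hv, s, hvs, hs⟩ := h.exists_bag_of_subset K.subset_univ hK hne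
    refine ⟨s, fun u hu => ?_⟩
    obtain rfl | huv := eq_or_ne u v
    · exact hvs
    · obtain ⟨-, t, hut, hvt⟩ := hclique hu hv huv
      exact hs u hu t hut hvt

lemma exists_isTreeDecomp_ncard_le_treewidth [Finite V] (G : SimpleGraph V) :
    ∃ (n : ℕ) (tree : SimpleGraph (Fin n)) (χ : Fin n → Set V),
      IsTreeDecomp G tree χ ∧ ∀ t, (χ t).ncard ≤ treewidth G + 1 := by
  have hsingle : IsTreeDecomp G (⊥ : SimpleGraph (Fin 1)) fun _ => Set.univ :=
    { isTree := .of_subsingleton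
      bags_subset := by simp
      mem_bag := by simp
      edge_bag := by simp
      trace_connected := fun x s _ t _ => Subsingleton.elim s t ▸ .refl (by simp) }
  exact Nat.sInf_mem (s := {w | ∃ (n : ℕ) (tree : SimpleGraph (Fin n)) (χ : Fin n → Set V),
    IsTreeDecomp G tree χ ∧ ∀ t, (χ t).ncard ≤ w + 1})
    ⟨Nat.card V, 1, ⊥, _, hsingle, by simp [Set.ncard_univ]⟩

end TreeDecomposition

section MaximalCliques

variable {H : SimpleGraph V} {W : Set V} {v : V}

/-- The maximal cliques of the subgraph of `H` induced on `W`, as sets of vertices of `H`. They are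
the bags of a clique tree of that subgraph. -/
def maximalCliquesOn (H : SimpleGraph V) (W : Set V) : Set (Set V) :=
  {K | Maximal (fun K => K ⊆ W ∧ H.IsClique K) K}

lemma mem_maximalCliquesOn {K : Set V} :
    K ∈ maximalCliquesOn H W ↔ Maximal (fun K => K ⊆ W ∧ H.IsClique K) K :=
  Iff.rfl

lemma exists_subset_mem_maximalCliquesOn {K : Set V} (hW : W.Finite) (hKW : K ⊆ W)
    (hK : H.IsClique K) : ∃ M ∈ maximalCliquesOn H W, K ⊆ M := by
  obtain ⟨M, hKM, hM⟩ := (hW.finite_subsets.subset fun L (hL : L ⊆ W ∧ H.IsClique L) =>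
    hL.1).exists_le_maximal ⟨hKW, hK⟩
  exact ⟨M, hM, hKM⟩

lemma maximalCliquesOn_empty : maximalCliquesOn H ∅ = {∅} := by
  ext K
  rw [mem_maximalCliquesOn, Set.mem_singleton_iff]
  refine ⟨fun hK => Set.subset_empty_iff.1 hK.prop.1, ?_⟩
  rintro rfl
  exact ⟨⟨subset_rfl, by simp⟩, fun L hL _ => hL.1⟩

lemma IsSimplicialIn.isClique_insert (h : IsSimplicialIn H W v) :
    H.IsClique (insert v (W ∩ H.neighborSet v)) :=
  IsClique.insert h fun _ hx _ => hx.2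

lemma subset_insert_inter_neighborSet_of_isClique {K : Set V} (hKW : K ⊆ W) (hK : H.IsClique K)
    (hv : v ∈ K) : K ⊆ insert v (W ∩ H.neighborSet v) := fun x hx =>
  (eq_or_ne x v).imp id fun hxv => ⟨hKW hx, hK hv hx hxv.symm⟩

lemma inter_neighborSet_subset_sdiff_singleton : W ∩ H.neighborSet v ⊆ W \ {v} :=
  fun _ hx => ⟨hx.1, fun hxv => H.irrefl (hxv ▸ hx.2)⟩

lemma IsSimplicialIn.insert_mem_maximalCliquesOn (hv : v ∈ W) (h : IsSimplicialIn H W v) :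
    insert v (W ∩ H.neighborSet v) ∈ maximalCliquesOn H W :=
  ⟨⟨Set.insert_subset hv Set.inter_subset_left, h.isClique_insert⟩, fun _ hK hle =>
    subset_insert_inter_neighborSet_of_isClique hK.1 hK.2 (hle (.inl rfl))⟩

lemma IsSimplicialIn.maximalCliquesOn_eq_insert (hv : v ∈ W) (h : IsSimplicialIn H W v) :
    maximalCliquesOn H W = insert (insert v (W ∩ H.neighborSet v))
      (maximalCliquesOn H (W \ {v}) \ {W ∩ H.neighborSet v}) := by
  have hN := mem_maximalCliquesOn.1 (h.insert_mem_maximalCliquesOn hv)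
  ext K
  rw [Set.mem_insert_iff, Set.mem_sdiff, Set.mem_singleton_iff, mem_maximalCliquesOn,
    mem_maximalCliquesOn]
  refine ⟨fun hK => ?_, ?_⟩
  · by_cases hvK : v ∈ K
    · exact .inl (hK.eq_of_subset hN.prop
        (subset_insert_inter_neighborSet_of_isClique hK.prop.1 hK.prop.2 hvK))
    · refine .inr ⟨⟨⟨Set.subset_sdiff_singleton hK.prop.1 hvK, hK.prop.2⟩, fun L hL hKL =>
        hK.2 ⟨hL.1.trans Set.sdiff_subset, hL.2⟩ hKL⟩, ?_⟩
      rintro rfl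
      exact hvK (hK.2 hN.prop (Set.subset_insert _ _) (.inl rfl))
  · rintro (rfl | ⟨hK, hKN⟩)
    · exact hN
    · refine ⟨⟨hK.prop.1.trans Set.sdiff_subset, hK.prop.2⟩, fun L hL hKL => ?_⟩
      by_cases hvL : v ∈ L
      · have hsub : K ⊆ W ∩ H.neighborSet v := fun x hx =>
          (subset_insert_inter_neighborSet_of_isClique hL.1 hL.2 hvL (hKL hx)).resolve_left
            fun hxv => (hK.prop.1 hx).2 hxv
        exact absurd (hK.eq_of_subset ⟨inter_neighborSet_subset_sdiff_singleton, h⟩ hsub) hKN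
      · exact hK.2 ⟨Set.subset_sdiff_singleton hL.1 hvL, hL.2⟩ hKL

end MaximalCliques

section AddLeaf

variable {T : Type*} {tree : SimpleGraph T} {t : T}

/-- The graph obtained from `tree` by attaching the new vertex `none` to `t` by an edge. -/
def addLeaf (tree : SimpleGraph T) (t : T) : SimpleGraph (Option T) :=
  tree.map Function.Embedding.some ⊔ edge none (some t)

lemma addLeaf_adj_none_some : (addLeaf tree t).Adj none (some t) :=
  .inr (by simp [edge_adj])

/-- The inclusion of a graph into the graph with a leaf attached. -/
def addLeaf.someHom (tree : SimpleGraph T) (t : T) : tree →g addLeaf tree t :=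
  (Hom.ofLE le_sup_left).comp (Embedding.map .some tree).toHom

lemma addLeaf_connected (h : tree.Connected) : (addLeaf tree t).Connected := by
  rw [connected_iff_exists_forall_reachable]
  refine ⟨some t, ?_⟩
  rintro (_ | s)
  exacts [addLeaf_adj_none_some.symm.reachable, (h.preconnected t s).map (addLeaf.someHom tree t)]

lemma addLeaf_edgeSet :
    (addLeaf tree t).edgeSet = insert s(none, some t) (Sym2.map some '' tree.edgeSet) := by
  rw [addLeaf, edgeSet_sup, edgeSet_map, edgeSet_edge_of_ne (by simp), Set.union_comm]
  rfl

lemma addLeaf_isTree [Finite T] (h : tree.IsTree) : (addLeaf tree t).IsTree := by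
  rw [isTree_iff_connected_and_card] at h ⊢
  have hnew : s(none, some t) ∉ Sym2.map some '' tree.edgeSet := by
    rintro ⟨⟨a, b⟩, -, he⟩
    simp at he
  have hcard := h.2
  rw [Nat.card_coe_set_eq] at hcard ⊢
  refine ⟨addLeaf_connected h.1, ?_⟩
  rw [addLeaf_edgeSet, Set.ncard_insert_of_notMem hnew, Finite.card_option,
    Set.ncard_image_of_injective _ (Sym2.map.injective (Option.some_injective T)), hcard]

end AddLeaf

section CliqueTree

variable {T : Type*} {H : SimpleGraph V} {W : Set V} {tree : SimpleGraph T} {χ : T → Set V}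
  {v : V} {t : T}

/-- A clique tree of the subgraph of `H` induced on `W`: a tree whose nodes are in bijection, via
`χ`, with the maximal cliques of that subgraph, such that the nodes whose cliques contain a given
vertex span a subtree. -/
structure IsCliqueTree {T : Type*} (H : SimpleGraph V) (W : Set V) (tree : SimpleGraph T)
    (χ : T → Set V) : Prop where
  isTree : tree.IsTree
  injective : Function.Injective χ
  range_eq : Set.range χ = maximalCliquesOn H W
  trace_connected : ∀ x : V, ∀ t₁, x ∈ χ t₁ → ∀ t₂, x ∈ χ t₂ →
    ConnectedIn tree {t | x ∈ χ t} t₁ t₂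

lemma IsCliqueTree.maximal (h : IsCliqueTree H W tree χ) (t : T) :
    Maximal (fun K => K ⊆ W ∧ H.IsClique K) (χ t) :=
  mem_maximalCliquesOn.1 (h.range_eq ▸ Set.mem_range_self t)

lemma IsCliqueTree.exists_subset_bag (h : IsCliqueTree H W tree χ) (hW : W.Finite) {K : Set V}
    (hKW : K ⊆ W) (hK : H.IsClique K) : ∃ t, K ⊆ χ t := by
  obtain ⟨M, hM, hKM⟩ := exists_subset_mem_maximalCliquesOn hW hKW hK
  rw [← h.range_eq] at hM
  obtain ⟨t, rfl⟩ := hM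
  exact ⟨t, hKM⟩

lemma IsCliqueTree.isTreeDecompOn (h : IsCliqueTree H W tree χ) (hW : W.Finite) :
    IsTreeDecompOn H W tree χ where
  isTree := h.isTree
  bags_subset t := (h.maximal t).prop.1
  mem_bag x hx := by
    simpa using h.exists_subset_bag hW (Set.singleton_subset_iff.2 hx) (by simp)
  edge_bag x hx y hy hxy := by
    simpa [Set.insert_subset_iff] using
      h.exists_subset_bag hW (Set.pair_subset hx hy) (isClique_pair.2 fun _ => hxy)
  trace_connected := h.trace_connected

lemma IsCliqueTree.notMem_bag_of_notMem (h : IsCliqueTree H W tree χ) (hv : v ∉ W) (t : T) :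
    v ∉ χ t :=
  fun hvt => hv ((h.maximal t).prop.1 hvt)

lemma range_update_of_injective {α β : Type*} [DecidableEq α] {f : α → β}
    (hf : Function.Injective f) (a : α) (b : β) :
    Set.range (Function.update f a b) = insert b (Set.range f \ {f a}) := by
  ext y
  constructor
  · rintro ⟨c, rfl⟩
    obtain rfl | hc := eq_or_ne c a
    · simp
    · simp [hc, hf.eq_iff]
  · rintro (rfl | ⟨⟨c, rfl⟩, hc⟩)
    · exact ⟨a, Function.update_self ..⟩
    · exact ⟨c, Function.update_of_ne (fun h => hc (congrArg f h)) ..⟩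

lemma injective_update_of_notMem_range {α β : Type*} [DecidableEq α] {f : α → β}
    (hf : Function.Injective f) (a : α) {b : β} (hb : b ∉ Set.range f) :
    Function.Injective (Function.update f a b) := by
  intro c d hcd
  grind [Function.update_apply, Function.Injective]

lemma IsCliqueTree.update_insert [DecidableEq T] (h : IsCliqueTree H (W \ {v}) tree χ)
    (hv : v ∈ W) (hsimp : IsSimplicialIn H W v) (ht : χ t = W ∩ H.neighborSet v) :
    IsCliqueTree H W tree (Function.update χ t (insert v (χ t))) where
  isTree := h.isTree
  injective := injective_update_of_notMem_range h.injective t fun ⟨s, hs⟩ =>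
    h.notMem_bag_of_notMem (by simp) s (hs ▸ Set.mem_insert v (χ t))
  range_eq := by
    rw [range_update_of_injective h.injective, h.range_eq, ht, hsimp.maximalCliquesOn_eq_insert hv]
  trace_connected x a ha b hb := by
    obtain rfl | hxv := eq_or_ne x v
    · have hbag (s : T) (hs : x ∈ Function.update χ t (insert x (χ t)) s) : s = t := by
        by_contra hst
        rw [Function.update_of_ne hst] at hs
        exact h.notMem_bag_of_notMem (by simp) s hs
      obtain rfl := hbag a ha
      obtain rfl := hbag b hb
      exact .refl ha
    · have hbag (s : T) : x ∈ Function.update χ t (insert v (χ t)) s ↔ x ∈ χ s := by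
        obtain rfl | hst := eq_or_ne s t
        · simp [hxv]
        · simp [hst]
      simp only [hbag] at ha hb ⊢
      exact h.trace_connected x a ha b hb

lemma IsCliqueTree.addLeaf_insert [Finite T] (h : IsCliqueTree H (W \ {v}) tree χ)
    (hv : v ∈ W) (hsimp : IsSimplicialIn H W v)
    (hN : W ∩ H.neighborSet v ∉ Set.range χ) (ht : W ∩ H.neighborSet v ⊆ χ t) :
    IsCliqueTree H W (addLeaf tree t)
      (fun o => o.elim (insert v (W ∩ H.neighborSet v)) χ) where
  isTree := addLeaf_isTree h.isTree
  injective := Option.injective_iff.2 ⟨h.injective, by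
    rintro ⟨s, hs : χ s = insert v (W ∩ H.neighborSet v)⟩
    exact h.notMem_bag_of_notMem (by simp) s (hs ▸ Set.mem_insert v _)⟩
  range_eq := by
    rw [Option.range_elim, hsimp.maximalCliquesOn_eq_insert hv, ← h.range_eq,
      Set.sdiff_singleton_eq_self hN]
  trace_connected x := by
    let S : Set (Option T) := {o | x ∈ o.elim (insert v (W ∩ H.neighborSet v)) χ}
    have hsome (a b : T) (ha : x ∈ χ a) (hb : x ∈ χ b) :
        ConnectedIn (addLeaf tree t) S (some a) (some b) :=
      (h.trace_connected x a ha b hb).map (addLeaf.someHom tree t) fun _ hs => hs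
    have hnone (hx : x ∈ insert v (W ∩ H.neighborSet v)) (b : T) (hb : x ∈ χ b) :
        ConnectedIn (addLeaf tree t) S none (some b) := by
      have hxv : x ≠ v := fun hxv => h.notMem_bag_of_notMem (by simp) b (hxv ▸ hb)
      have hxt : x ∈ χ t := ht (hx.resolve_left hxv)
      exact (ConnectedIn.of_adj addLeaf_adj_none_some hx hxt).trans (hsome t b hxt hb)
    rintro (_ | a) ha (_ | b) hb
    · exact .refl ha
    · exact hnone ha b hb
    · exact (hnone hb a ha).symm
    · exact hsome a b ha hb

lemma IsChordal.exists_isCliqueTree (hH : IsChordal H) (hW : W.Finite) :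
    ∃ (T : Type) (_ : Finite T) (tree : SimpleGraph T) (χ : T → Set V),
      IsCliqueTree H W tree χ := by
  classical
  induction hn : W.ncard generalizing W with
  | zero =>
    obtain rfl := (Set.ncard_eq_zero hW).1 hn
    exact ⟨Unit, inferInstance, ⊥, fun _ => ∅, .of_subsingleton, fun _ _ _ => rfl,
      by rw [Set.range_const, maximalCliquesOn_empty], fun x _ hx => hx.elim⟩
  | succ n ih =>
    obtain ⟨w, hw⟩ := (Set.ncard_pos hW).1 (by omega)
    obtain ⟨v, hv, -, hsimp⟩ := hH.exists_isSimplicialIn hW isClique_empty fun h => h hw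
    obtain ⟨T, _, tree, χ, h⟩ := ih (W := W \ {v}) hW.sdiff
      (by rw [Set.ncard_sdiff_singleton_of_mem hv, hn, Nat.add_sub_cancel])
    by_cases hN : W ∩ H.neighborSet v ∈ Set.range χ
    · obtain ⟨t, ht⟩ := hN
      exact ⟨T, inferInstance, tree, _, h.update_insert hv hsimp ht⟩
    · obtain ⟨t, ht⟩ := h.exists_subset_bag hW.sdiff inter_neighborSet_subset_sdiff_singleton hsimp
      exact ⟨Option T, inferInstance, _, _, h.addLeaf_insert hv hsimp hN ht⟩

end CliqueTree

section Refinement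

variable [Finite V] {G : SimpleGraph V}

lemma exists_isMinimalChordalCompletion_le {K : SimpleGraph V} (hGK : G ≤ K) (hK : IsChordal K) :
    ∃ H ≤ K, IsMinimalChordalCompletion G H := by
  obtain ⟨H, hHK, hH⟩ :=
    (Set.toFinite {H : SimpleGraph V | G ≤ H ∧ IsChordal H}).exists_le_minimal ⟨hGK, hK⟩
  exact ⟨H, hHK, hH.prop.1, hH.prop.2, fun H' hGH' hH'H hH' =>
    hH'H.antisymm (hH.2 ⟨hGH', hH'⟩ hH'H)⟩

lemma IsMinimalChordalCompletion.exists_isTreeDecomp {H : SimpleGraph V}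
    (hH : IsMinimalChordalCompletion G H) :
    ∃ (n : ℕ) (tree : SimpleGraph (Fin n)) (χ : Fin n → Set V),
      IsTreeDecomp G tree χ ∧ ∀ t, H.IsClique (χ t) ∧ IsPMC G (χ t) := by
  obtain ⟨T, _, tree, χ, h⟩ := hH.2.1.exists_isCliqueTree Set.finite_univ
  obtain ⟨n, ⟨e⟩⟩ := Finite.exists_equiv_fin T
  refine ⟨n, tree.comap e.symm, χ ∘ e.symm,
    ((h.isTreeDecompOn Set.finite_univ).mono hH.1).comap_equiv e.symm, fun t => ?_⟩
  have hmax := h.maximal (e.symm t)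
  exact ⟨hmax.prop.2, H, hH, hmax.prop.2, fun K hK hle =>
    (hmax.eq_of_subset ⟨K.subset_univ, hK⟩ hle).symm⟩

theorem IsTreeDecomp.exists_isPMC_refinement {T : Type*} {tree₀ : SimpleGraph T} {χ₀ : T → Set V}
    (h₀ : IsTreeDecomp G tree₀ χ₀) :
    ∃ (n : ℕ) (tree : SimpleGraph (Fin n)) (χ : Fin n → Set V),
      IsTreeDecomp G tree χ ∧ (∀ t, IsPMC G (χ t)) ∧ ∀ t, ∃ s, χ t ⊆ χ₀ s := by
  obtain ⟨H, hH₀, hH⟩ := exists_isMinimalChordalCompletion_le h₀.le_bagGraph h₀.isChordal_bagGraph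
  obtain ⟨n, tree, χ, h, hχ⟩ := hH.exists_isTreeDecomp
  exact ⟨n, tree, χ, h, fun t => (hχ t).2, fun t =>
    h₀.exists_subset_bag_of_isClique (Set.toFinite _) ((hχ t).1.mono hH₀)⟩

end Refinement

/-- Every graph has a structured tree decomposition of width `tw(G)`:
all bags are potential maximal cliques and have at most `tw(G) + 1` vertices. -/
theorem stmt0 [Finite V] (G : SimpleGraph V) :
    ∃ (n : ℕ) (tree : SimpleGraph (Fin n)) (χ : Fin n → Set V),
      IsTreeDecomp G tree χ ∧ (∀ t, IsPMC G (χ t)) ∧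
      ∀ t, (χ t).ncard ≤ treewidth G + 1 := by
  obtain ⟨n₀, tree₀, χ₀, h₀, hwidth⟩ := exists_isTreeDecomp_ncard_le_treewidth G
  obtain ⟨n, tree, χ, h, hpmc, hsub⟩ := h₀.exists_isPMC_refinement
  refine ⟨n, tree, χ, h, hpmc, fun t => ?_⟩
  obtain ⟨s, hts⟩ := hsub t
  exact (Set.ncard_le_ncard hts).trans (hwidth s)
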